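/- arXiv:1611.06444 — 2 statements merged into one kernel-verified Lean document; each statement's English description precedes it below -/
import Mathlib

section
/- Let Γ be a strongly connected digraph on vertices {1,…,n}, let S = S(Γ) be its total sandpile group, and let S_i = S_i(Γ) be its sandpile groups at the vertices. Then for every i ∈ {1,…,n} there exists a surjective group homomorphism S_i → S, and |S| = gcd(|S_1|, …, |S_n|). -/
open Matrix

noncomputable section

/-- The Laplacian of the digraph on `Fin n` with edge multiplicities `d i j ∈ ℕ`:
`L i j = -d i j` for `i ≠ j` and `L i i = outdeg i - d i i = ∑_{k ≠ i} d i k`. -/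
def digraphLaplacian {n : ℕ} (d : Fin n → Fin n → ℕ) : Matrix (Fin n) (Fin n) ℤ :=
  Matrix.of fun i j => if i = j then ∑ k ∈ Finset.univ.erase i, (d i k : ℤ) else -(d i j : ℤ)

/-- `ℤ₀ⁿ`: the submodule of `ℤⁿ` of vectors whose coordinates sum to zero. -/
def zeroSum (n : ℕ) : Submodule ℤ (Fin n → ℤ) where
  carrier := {v | ∑ i, v i = 0}
  add_mem' := by
    intro x y hx hy
    simp only [Set.mem_setOf_eq, Pi.add_apply, Finset.sum_add_distrib] at *
    rw [hx, hy, add_zero]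
  zero_mem' := by simp
  smul_mem' := by
    intro c x hx
    simp only [Set.mem_setOf_eq, Pi.smul_apply, smul_eq_mul, ← Finset.mul_sum] at *
    rw [hx, mul_zero]

/-- The total sandpile group `S(Γ) = ℤ₀ⁿ / L(Γ)ℤⁿ`, where the Laplacian acts on row
vectors (so that its image lies in `ℤ₀ⁿ`). -/
abbrev totalSandpile {n : ℕ} (d : Fin n → Fin n → ℕ) : Type :=
  zeroSum n ⧸ Submodule.comap (zeroSum n).subtype
    (LinearMap.range (Matrix.mulVecLin (digraphLaplacian d)ᵀ))

/-- The sandpile group at the vertex `i`: `S_i(Γ) = ℤ^{n-1} / L_i ℤ^{n-1}`, where `L_i` is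
the Laplacian with the `i`-th row and column removed. -/
abbrev vertexSandpile {n : ℕ} (d : Fin (n + 1) → Fin (n + 1) → ℕ) (i : Fin (n + 1)) : Type :=
  (Fin n → ℤ) ⧸ LinearMap.range
    (Matrix.mulVecLin ((digraphLaplacian d).submatrix i.succAbove i.succAbove)ᵀ)

/-- A digraph with edge multiplicities `d` is strongly connected if any vertex can be
reached from any other through edges of positive multiplicity. -/
def StronglyConnected {n : ℕ} (d : Fin n → Fin n → ℕ) : Prop :=
  ∀ i j : Fin n, Relation.ReflTransGen (fun u v => 0 < d u v) i j

/-!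
Let `A` be the transposed Laplacian, as a map `ℤⁿ → ℤ₀ⁿ`, and let `Kᵢ ⊆ ℤⁿ` be the vectors whose
`i`-th coordinate vanishes. Forgetting the `i`-th coordinate identifies `ℤ₀ⁿ` with `ℤⁿ⁻¹` and
`A Kᵢ` with the image of `Lᵢᵀ`. Hence `Sᵢ` is an extension of `S` by
`A ℤⁿ / A Kᵢ ≅ ℤⁿ / (Kᵢ + ker A)`, and reading off the `i`-th coordinate turns the latter into
`ℤ / (ker A)ᵢ`. If some vertex can be reached from every vertex, then `ker A` is spanned by a vector
`p` with coprime coordinates: the absolute value of a kernel vector is again a kernel vector, and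
if one of its coordinates vanishes then so do those at the in-neighbours. Thus `|Sᵢ| = |S| |pᵢ|`.
-/

section Algebra

lemma relIndex_map_ker_range {G H K : Type*} [AddGroup G] [AddGroup H] [AddGroup K]
    (f : G →+ H) {π : G →+ K} (hπ : Function.Surjective π) :
    (π.ker.map f).relIndex f.range = (f.ker.map π).index := by
  rw [AddMonoidHom.range_eq_map, AddSubgroup.relIndex_map_map, top_sup_eq,
    AddSubgroup.relIndex_top_right, sup_comm, ← AddSubgroup.comap_map_eq,
    AddSubgroup.index_comap_of_surjective _ hπ]

lemma finset_gcd_natAbs {ι : Type*} (s : Finset ι) (p : ι → ℤ) :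
    s.gcd (fun i => (p i).natAbs) = (s.gcd p).natAbs := by
  refine Nat.dvd_antisymm ?_ (Finset.dvd_gcd fun i hi => Int.natAbs_dvd_natAbs.2
    (Finset.gcd_dvd hi))
  rw [← Int.natCast_dvd]
  exact Finset.dvd_gcd fun i hi => Int.natCast_dvd.2 (Finset.gcd_dvd hi)

lemma exists_gcd_eq_one_ker_eq_span_singleton {ι R M : Type*} [Fintype ι] [CommRing R] [IsDomain R]
    [StrongNormalizedGCDMonoid R] [AddCommGroup M] [Module R M] [Module.IsTorsionFree R M]
    {f : (ι → R) →ₗ[R] M} (hf : LinearMap.ker f ≠ ⊥) {j : ι}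
    (hj : ∀ w ∈ LinearMap.ker f, w j = 0 → w = 0) :
    ∃ p : ι → R, Finset.univ.gcd p = 1 ∧ LinearMap.ker f = Submodule.span R {p} := by
  obtain ⟨v, hv, hv0⟩ := Submodule.exists_mem_ne_zero_of_ne_bot hf
  obtain ⟨p, hvp, hgcd⟩ := Finset.univ.extract_gcd v ⟨j, Finset.mem_univ j⟩
  replace hvp : v = Finset.univ.gcd v • p := funext fun i => hvp i (Finset.mem_univ i)
  have hp : p ∈ LinearMap.ker f := by
    have hg : Finset.univ.gcd v ≠ 0 := fun h => hv0 (by rw [hvp, h, zero_smul])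
    rw [LinearMap.mem_ker, hvp, map_smul] at hv
    exact (smul_eq_zero.1 hv).resolve_left hg
  have hpj : p j ≠ 0 := fun h => hv0 (by rw [hvp, hj p hp h, smul_zero])
  refine ⟨p, hgcd, le_antisymm (fun w hw => ?_) ((Submodule.span_singleton_le_iff_mem _ _).2 hp)⟩
  have hprop : p j • w = w j • p := by
    rw [← sub_eq_zero]
    exact hj _ (sub_mem (Submodule.smul_mem _ _ hw) (Submodule.smul_mem _ _ hp))
      (by simp [mul_comm])
  -- `p j` divides every `w j * p i`, hence also their gcd `w j`.
  obtain ⟨c, hc⟩ : p j ∣ w j := by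
    have hdvd : p j ∣ Finset.univ.gcd fun i => w j * p i :=
      Finset.dvd_gcd fun i _ => ⟨w i, (congrFun hprop i).symm⟩
    rwa [Finset.gcd_mul_left, hgcd, mul_one, dvd_normalize_iff] at hdvd
  refine Submodule.mem_span_singleton.2 ⟨c, smul_right_injective _ hpj ?_⟩
  simp only [hprop, hc, mul_smul]

lemma range_mulVecLin_submatrix_succAbove {m R : Type*} [CommSemiring R] {n : ℕ}
    (A : Matrix m (Fin (n + 1)) R) (i : Fin (n + 1)) :
    LinearMap.range (A.submatrix id i.succAbove).mulVecLin =
      (LinearMap.ker (LinearMap.proj i : (Fin (n + 1) → R) →ₗ[R] R)).map A.mulVecLin := by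
  have hmulVec (a : R) (ha : a = 0) (x : Fin n → R) :
      A *ᵥ i.insertNth a x = A.submatrix id i.succAbove *ᵥ x := by
    ext k
    simp [mulVec, dotProduct, Fin.sum_univ_succAbove _ i, ha]
  ext y
  constructor
  · rintro ⟨x, rfl⟩
    exact ⟨i.insertNth 0 x, by simp, hmulVec 0 rfl x⟩
  · rintro ⟨x, hx, rfl⟩
    refine ⟨i.removeNth x, ?_⟩
    simpa using (hmulVec (x i) hx (i.removeNth x)).symm

lemma range_mulVecLin_submatrix_succAbove_le {m R : Type*} [CommSemiring R] {n : ℕ}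
    (A : Matrix m (Fin (n + 1)) R) (i : Fin (n + 1)) :
    LinearMap.range (A.submatrix id i.succAbove).mulVecLin ≤ LinearMap.range A.mulVecLin :=
  (range_mulVecLin_submatrix_succAbove A i).trans_le LinearMap.map_le_range

end Algebra

section ZeroSum

variable {n : ℕ}

lemma range_mulVecLin_le_zeroSum {m : Type*} [Fintype m] {A : Matrix (Fin n) m ℤ}
    (hA : 1 ᵥ* A = 0) :
    LinearMap.range A.mulVecLin ≤ zeroSum n := by
  rintro _ ⟨x, rfl⟩
  change ∑ j, (A *ᵥ x) j = 0
  rw [← one_dotProduct, dotProduct_mulVec, hA, zero_dotProduct]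

/-- The identification of `ℤ₀ⁿ⁺¹` with `ℤⁿ` that forgets the `i`-th coordinate, which is minus the
sum of the others. -/
def zeroSumEquiv (i : Fin (n + 1)) : zeroSum (n + 1) ≃ₗ[ℤ] (Fin n → ℤ) where
  __ := LinearMap.funLeft ℤ ℤ i.succAbove ∘ₗ (zeroSum (n + 1)).subtype
  invFun x := ⟨i.insertNth (-∑ k, x k) x, by
    change ∑ j, _ = 0
    simp [Fin.sum_univ_succAbove _ i]⟩
  left_inv v := by
    have hv : v.1 i + ∑ k, v.1 (i.succAbove k) = 0 := Fin.sum_univ_succAbove v.1 i ▸ v.2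
    exact Subtype.ext (Fin.insertNth_eq_iff.2 ⟨(eq_neg_of_add_eq_zero_left hv).symm, rfl⟩)
  right_inv x := i.removeNth_insertNth (α := fun _ => ℤ) _ x

section ForgetRow

variable {m : Type*} [Fintype m] {A : Matrix (Fin (n + 1)) m ℤ}

lemma ker_mulVecLin_submatrix_succAbove (hA : LinearMap.range A.mulVecLin ≤ zeroSum (n + 1))
    (i : Fin (n + 1)) :
    LinearMap.ker (A.submatrix i.succAbove id).mulVecLin = LinearMap.ker A.mulVecLin := by
  ext x
  let v : zeroSum (n + 1) := ⟨A *ᵥ x, hA ⟨x, rfl⟩⟩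
  change zeroSumEquiv i v = 0 ↔ v.1 = 0
  simp

lemma map_zeroSumEquiv_comap_subtype (hA : LinearMap.range A.mulVecLin ≤ zeroSum (n + 1))
    (i : Fin (n + 1)) :
    ((LinearMap.range A.mulVecLin).comap (zeroSum (n + 1)).subtype).map
        (zeroSumEquiv i : zeroSum (n + 1) →ₗ[ℤ] (Fin n → ℤ)) =
      LinearMap.range (A.submatrix i.succAbove id).mulVecLin := by
  change Submodule.map (LinearMap.funLeft ℤ ℤ i.succAbove ∘ₗ (zeroSum (n + 1)).subtype) _ = _
  rw [Submodule.map_comp, Submodule.map_comap_subtype, inf_eq_right.2 hA, ← LinearMap.range_comp]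
  rfl

/-- The total sandpile group as a quotient of `ℤⁿ`, for an arbitrary matrix `A` with image in
`ℤ₀ⁿ⁺¹` in place of the transposed Laplacian. -/
def zeroSumQuotientEquiv (hA : LinearMap.range A.mulVecLin ≤ zeroSum (n + 1)) (i : Fin (n + 1)) :
    (zeroSum (n + 1) ⧸ (LinearMap.range A.mulVecLin).comap (zeroSum (n + 1)).subtype) ≃ₗ[ℤ]
      (Fin n → ℤ) ⧸ LinearMap.range (A.submatrix i.succAbove id).mulVecLin :=
  Submodule.Quotient.equiv _ _ (zeroSumEquiv i) (map_zeroSumEquiv_comap_subtype hA i)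

end ForgetRow

variable {m : ℕ} {A : Matrix (Fin (n + 1)) (Fin (m + 1)) ℤ}

lemma relIndex_range_mulVecLin_submatrix (hA : LinearMap.range A.mulVecLin ≤ zeroSum (n + 1))
    {p : Fin (m + 1) → ℤ} (hp : LinearMap.ker A.mulVecLin = Submodule.span ℤ {p})
    (i : Fin (n + 1)) (j : Fin (m + 1)) :
    (LinearMap.range (A.submatrix i.succAbove j.succAbove).mulVecLin).toAddSubgroup.relIndex
      (LinearMap.range (A.submatrix i.succAbove id).mulVecLin).toAddSubgroup = (p j).natAbs := by
  have hker : AddMonoidHom.ker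
      ((A.submatrix i.succAbove id).mulVecLin : (Fin (m + 1) → ℤ) →+ (Fin n → ℤ)) =
        AddSubgroup.zmultiples p := by
    refine (LinearMap.ker_toAddSubgroup _).symm.trans ?_
    rw [ker_mulVecLin_submatrix_succAbove hA, hp,
      Submodule.span_singleton_toAddSubgroup_eq_zmultiples]
  have hmap : LinearMap.range (A.submatrix i.succAbove j.succAbove).mulVecLin =
      (LinearMap.ker (LinearMap.proj j : (Fin (m + 1) → ℤ) →ₗ[ℤ] ℤ)).map
        (A.submatrix i.succAbove id).mulVecLin :=
    range_mulVecLin_submatrix_succAbove (A.submatrix i.succAbove id) j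
  rw [hmap, Submodule.map_toAddSubgroup, LinearMap.range_toAddSubgroup,
    LinearMap.ker_toAddSubgroup]
  refine (relIndex_map_ker_range _ (Function.surjective_eval j)).trans ?_
  rw [hker, AddMonoidHom.map_zmultiples]
  exact Int.index_zmultiples (p j)

lemma card_quotient_range_mulVecLin_submatrix
    (hA : LinearMap.range A.mulVecLin ≤ zeroSum (n + 1))
    {p : Fin (m + 1) → ℤ} (hp : LinearMap.ker A.mulVecLin = Submodule.span ℤ {p})
    (i : Fin (n + 1)) (j : Fin (m + 1)) :
    Nat.card ((Fin n → ℤ) ⧸ LinearMap.range (A.submatrix i.succAbove j.succAbove).mulVecLin) =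
      Nat.card (zeroSum (n + 1) ⧸
        (LinearMap.range A.mulVecLin).comap (zeroSum (n + 1)).subtype) * (p j).natAbs := by
  rw [Nat.card_congr (zeroSumQuotientEquiv hA i).toEquiv, mul_comm,
    ← relIndex_range_mulVecLin_submatrix hA hp i j]
  exact (AddSubgroup.relIndex_mul_index <| Submodule.toAddSubgroup_mono <|
    range_mulVecLin_submatrix_succAbove_le (A.submatrix i.succAbove id) j).symm

end ZeroSum

section Laplacian

variable {n : ℕ} (d : Fin n → Fin n → ℕ)

lemma digraphLaplacian_eq_diagonal_sub :
    digraphLaplacian d =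
      diagonal (fun i => ∑ k, (d i k : ℤ)) - of fun i j => (d i j : ℤ) := by
  ext i j
  rcases eq_or_ne i j with rfl | hij
  · simp [digraphLaplacian, Finset.sum_erase_eq_sub]
  · simp [digraphLaplacian, hij]

lemma digraphLaplacian_mulVec_one : digraphLaplacian d *ᵥ 1 = 0 := by
  ext i
  rw [digraphLaplacian_eq_diagonal_sub, sub_mulVec, Pi.sub_apply, mulVec_diagonal]
  simp [mulVec, dotProduct]

lemma range_digraphLaplacian_transpose_le_zeroSum :
    LinearMap.range (digraphLaplacian d)ᵀ.mulVecLin ≤ zeroSum n :=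
  range_mulVecLin_le_zeroSum (by rw [vecMul_transpose, digraphLaplacian_mulVec_one])

lemma ker_digraphLaplacian_transpose_ne_bot [NeZero n] :
    LinearMap.ker (digraphLaplacian d)ᵀ.mulVecLin ≠ ⊥ := by
  have hdet : (digraphLaplacian d)ᵀ.det = 0 := by
    rw [det_transpose]
    exact exists_mulVec_eq_zero_iff.1 ⟨1, one_ne_zero, digraphLaplacian_mulVec_one d⟩
  obtain ⟨v, hv0, hv⟩ := exists_mulVec_eq_zero_iff.2 hdet
  exact (Submodule.ne_bot_iff _).2 ⟨v, hv, hv0⟩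

lemma digraphLaplacian_transpose_mulVec_apply (x : Fin n → ℤ) (j : Fin n) :
    ((digraphLaplacian d)ᵀ *ᵥ x) j = (∑ k, (d j k : ℤ)) * x j - ∑ k, (d k j : ℤ) * x k := by
  rw [digraphLaplacian_eq_diagonal_sub, transpose_sub, diagonal_transpose,
    sub_mulVec, Pi.sub_apply, mulVec_diagonal]
  rfl

variable {d}

-- The triangle inequality bounds every coordinate of `Lᵀ|w|` above by `0`, and they sum to `0`.
lemma digraphLaplacian_transpose_mulVec_abs {w : Fin n → ℤ}
    (hw : (digraphLaplacian d)ᵀ *ᵥ w = 0) : (digraphLaplacian d)ᵀ *ᵥ |w| = 0 := by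
  have hle : ∀ j ∈ Finset.univ, ((digraphLaplacian d)ᵀ *ᵥ |w|) j ≤ 0 := by
    intro j _
    have hbalance : (∑ k, (d j k : ℤ)) * w j = ∑ k, (d k j : ℤ) * w k := by
      rw [← sub_eq_zero, ← digraphLaplacian_transpose_mulVec_apply, hw, Pi.zero_apply]
    rw [digraphLaplacian_transpose_mulVec_apply, sub_nonpos]
    calc (∑ k, (d j k : ℤ)) * |w j|
        = |(∑ k, (d j k : ℤ)) * w j| := by
          rw [abs_mul, abs_of_nonneg (Finset.sum_nonneg fun k _ => Int.natCast_nonneg _)]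
      _ = |∑ k, (d k j : ℤ) * w k| := by rw [hbalance]
      _ ≤ ∑ k, |(d k j : ℤ) * w k| := Finset.abs_sum_le_sum_abs _ _
      _ = ∑ k, (d k j : ℤ) * |w| k := by simp [abs_mul]
  have hsum : ∑ j, ((digraphLaplacian d)ᵀ *ᵥ |w|) j = 0 :=
    range_digraphLaplacian_transpose_le_zeroSum d ⟨|w|, rfl⟩
  ext j
  exact (Finset.sum_eq_zero_iff_of_nonpos hle).1 hsum j (Finset.mem_univ j)

lemma eq_zero_of_adj_of_digraphLaplacian_transpose_mulVec_eq_zero {w : Fin n → ℤ}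
    (hw : (digraphLaplacian d)ᵀ *ᵥ w = 0) {u v : Fin n} (huv : 0 < d u v) (hv : w v = 0) :
    w u = 0 := by
  have hinflow : ∑ k, (d k v : ℤ) * |w k| = 0 := by
    simpa [digraphLaplacian_transpose_mulVec_apply, hv] using
      congrFun (digraphLaplacian_transpose_mulVec_abs hw) v
  have hu := (Finset.sum_eq_zero_iff_of_nonneg fun k _ => by positivity).1 hinflow u
    (Finset.mem_univ u)
  simpa [huv.ne'] using hu

lemma exists_gcd_eq_one_ker_digraphLaplacian_transpose_eq_span {r : Fin n}
    (hr : ∀ v, Relation.ReflTransGen (fun u v => 0 < d u v) v r) :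
    ∃ p : Fin n → ℤ, Finset.univ.gcd p = 1 ∧
      LinearMap.ker (digraphLaplacian d)ᵀ.mulVecLin = Submodule.span ℤ {p} := by
  have : NeZero n := ⟨r.pos.ne'⟩
  refine exists_gcd_eq_one_ker_eq_span_singleton (ker_digraphLaplacian_transpose_ne_bot d)
    (j := r) fun w hw hwr => funext fun u => ?_
  exact (hr u).head_induction_on hwr fun huv _ hv =>
    eq_zero_of_adj_of_digraphLaplacian_transpose_mulVec_eq_zero hw huv hv

end Laplacian

section Sandpile

variable {n : ℕ} (d : Fin (n + 1) → Fin (n + 1) → ℕ)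

lemma exists_surjective_vertexSandpile_totalSandpile (i : Fin (n + 1)) :
    ∃ f : vertexSandpile d i →+ totalSandpile d, Function.Surjective f :=
  let e := zeroSumQuotientEquiv (range_digraphLaplacian_transpose_le_zeroSum d) i
  let q := Submodule.factor (range_mulVecLin_submatrix_succAbove_le
    ((digraphLaplacian d)ᵀ.submatrix i.succAbove id) i)
  ⟨(e.symm.toLinearMap ∘ₗ q).toAddMonoidHom,
    e.symm.surjective.comp (Submodule.factor_surjective _)⟩

-- If `i` cannot be reached from every vertex then `vertexSandpile d i` is infinite; its `Nat.card`
-- is then `0` and does not contribute to the gcd.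
theorem total_sandpile_surjection_and_card_gcd_general {r : Fin (n + 1)}
    (hr : ∀ v, Relation.ReflTransGen (fun u v => 0 < d u v) v r) :
    (∀ i : Fin (n + 1), ∃ f : vertexSandpile d i →+ totalSandpile d, Function.Surjective f) ∧
      Nat.card (totalSandpile d) =
        Finset.univ.gcd (fun i : Fin (n + 1) => Nat.card (vertexSandpile d i)) := by
  refine ⟨exists_surjective_vertexSandpile_totalSandpile d, ?_⟩
  obtain ⟨p, hgcd, hker⟩ := exists_gcd_eq_one_ker_digraphLaplacian_transpose_eq_span hr
  have hcard (i : Fin (n + 1)) :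
      Nat.card (vertexSandpile d i) = Nat.card (totalSandpile d) * (p i).natAbs :=
    card_quotient_range_mulVecLin_submatrix (range_digraphLaplacian_transpose_le_zeroSum d) hker i i
  simp only [hcard, Finset.gcd_mul_left, finset_gcd_natAbs, hgcd, Int.natAbs_one, mul_one,
    normalize_eq]

end Sandpile

/-- For a strongly connected digraph, each sandpile group `S_i` surjects onto the total
sandpile group `S`, and `|S| = gcd(|S_1|, …, |S_n|)`. -/
theorem total_sandpile_surjection_and_card_gcd {n : ℕ}
    (d : Fin (n + 1) → Fin (n + 1) → ℕ) (hconn : StronglyConnected d) :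
    (∀ i : Fin (n + 1), ∃ f : vertexSandpile d i →+ totalSandpile d, Function.Surjective f) ∧
      Nat.card (totalSandpile d) =
        Finset.univ.gcd (fun i : Fin (n + 1) => Nat.card (vertexSandpile d i)) :=
  total_sandpile_surjection_and_card_gcd_general d fun v => hconn v 0

end
end

section
/- Let G be a finite abelian group. Then ∑_H (Q / (|H| · |Aut(H)|)) · #Sur(H, G) = 1/|G|, where the sum runs over isomorphism classes of finite abelian groups H, Q = ∏_{p prime} ∏_{k=2}^∞ (1 − p^{−k}), Aut(H) is the automorphism group of H, and #Sur(H,G) is the number of surjective group homomorphisms from H to G. Equivalently, if Y is a random finite abelian group with P(Y ≅ H) = Q/(|H||Aut(H)|) for every finite abelian group H, then E[#Sur(Y, G)] = 1/|G|. -/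
noncomputable section

/-- The number of surjective additive homomorphisms from `A` to `B`. -/
def nSur (A B : Type*) [AddCommGroup A] [AddCommGroup B] : ℕ :=
  Nat.card {f : A →+ B // Function.Surjective f}

/-- `Q_p = ∏_{k=2}^∞ (1 - p^{-k})`. -/
def Qp (p : ℕ) : ℝ := ∏' k : ℕ, (1 - ((p : ℝ) ^ (k + 2))⁻¹)

/-- `Q = ∏_p Q_p`. -/
def Qconst : ℝ := ∏' p : Nat.Primes, Qp p

/-!
Since `ℤⁿ` has `|H|ⁿ` homomorphisms to `H`, the quantity `#Sur(ℤⁿ, H) / |H|ⁿ` tends to `1`. Hence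
`∑_H #Sur(H, G) / (|H|ᵘ |Aut H|)` is the limit of `∑_H #Sur(ℤⁿ, H) #Sur(H, G) / (|H|ⁿ⁺ᵘ |Aut H|)`.
A surjection `ℤⁿ → H`, up to `Aut H`, is a subgroup `L` of `ℤⁿ` with quotient `H`, so the latter
sum counts pairs `L ≤ ker f` with `f : ℤⁿ → G` surjective, with weight `[ℤⁿ : L]⁻ⁿ⁻ᵘ`. As
`ker f ≃ ℤⁿ` has index `|G|`, it equals `#Sur(ℤⁿ, G) |G|⁻ⁿ⁻ᵘ` times the value at `n + u` of the
subgroup zeta function of `ℤⁿ`, which is `ζ(u + 1) ⋯ ζ(u + n)`. As `n → ∞` this tends to `|G|⁻ᵘ`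
divided by the Cohen–Lenstra constant, by the Euler product of `ζ`. The theorem is the case `u = 1`.
-/

open Filter Topology
open scoped ENNReal

section CohenLenstraConstant

/-- The normalising constant `∏_p ∏_{j > u} (1 - p⁻ʲ)` of the Cohen–Lenstra distribution with
parameter `u`, in which a finite abelian group `H` has weight `1 / (|H|ᵘ |Aut H|)`. -/
def cohenLenstraConst (u : ℕ) : ℝ :=
  ∏' p : Nat.Primes, ∏' k : ℕ, (1 - ((p : ℝ) ^ (k + u + 1))⁻¹)

lemma cohenLenstraConst_one : cohenLenstraConst 1 = Qconst := rfl

lemma one_sub_prime_pow_inv_pos (p : Nat.Primes) {s : ℕ} (hs : s ≠ 0) :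
    0 < 1 - ((p : ℝ) ^ s)⁻¹ :=
  sub_pos.2 <| inv_lt_one_of_one_lt₀ <| one_lt_pow₀ (by exact_mod_cast p.2.one_lt) hs

lemma hasProd_one_sub_prime_pow_inv {s : ℕ} (hs : 1 < s) :
    HasProd (fun p : Nat.Primes => 1 - ((p : ℝ) ^ s)⁻¹) (∑' n : ℕ, ((n : ℝ) ^ s)⁻¹)⁻¹ := by
  let f : ℕ →*₀ ℝ :=
    { toFun := fun n => ((n : ℝ) ^ s)⁻¹
      map_zero' := by simp [Nat.ne_zero_of_lt hs]
      map_one' := by simp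
      map_mul' := fun a b => by simp [mul_pow, mul_comm] }
  have hf : Summable f := Real.summable_nat_pow_inv.2 hs
  have hpos : 0 < ∑' n, f n := hf.tsum_pos (fun n => by simp [f]) 1 (by simp)
  simpa [f] using
    (EulerProduct.eulerProduct_completely_multiplicative_hasProd hf.norm).inv₀ hpos.ne'

variable {u : ℕ}

lemma summable_prime_pow_inv (hu : u ≠ 0) :
    Summable fun x : Nat.Primes × ℕ => ((x.1 : ℝ) ^ (x.2 + u + 1))⁻¹ := by
  have hprimes : Summable fun p : Nat.Primes => ((p : ℝ) ^ 2)⁻¹ :=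
    (Real.summable_nat_pow_inv.2 one_lt_two).comp_injective Nat.Primes.coe_nat_injective
  refine (hprimes.mul_of_nonneg summable_geometric_two (fun _ => by positivity)
    fun _ => by positivity).of_nonneg_of_le (fun _ => by positivity) fun ⟨p, k⟩ => ?_
  have hp : (2 : ℝ) ≤ p := by exact_mod_cast p.2.two_le
  calc ((p : ℝ) ^ (k + u + 1))⁻¹ ≤ ((p : ℝ) ^ (2 + k))⁻¹ := by
        exact inv_anti₀ (by positivity) (pow_le_pow_right₀ (by linarith) (by omega))
    _ ≤ ((p : ℝ) ^ 2)⁻¹ * (1 / 2) ^ k := by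
        rw [pow_add, mul_inv, one_div, inv_pow]
        gcongr

lemma hasProd_cohenLenstraConst (hu : u ≠ 0) :
    HasProd (fun x : Nat.Primes × ℕ => 1 - ((x.1 : ℝ) ^ (x.2 + u + 1))⁻¹)
      (cohenLenstraConst u) := by
  simp only [cohenLenstraConst, sub_eq_add_neg]
  have hsum := (summable_prime_pow_inv hu).neg.norm
  have hmul := multipliable_one_add_of_summable hsum
  rw [← hmul.tprod_prod' fun p => multipliable_one_add_of_summable (hsum.prod_factor p)]
  exact hmul.hasProd

lemma hasProd_inv_zeta_cohenLenstraConst (hu : u ≠ 0) :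
    HasProd (fun k : ℕ => (∑' n : ℕ, ((n : ℝ) ^ (k + u + 1))⁻¹)⁻¹) (cohenLenstraConst u) := by
  have hswap : HasProd (fun x : ℕ × Nat.Primes => 1 - ((x.2 : ℝ) ^ (x.1 + u + 1))⁻¹)
      (cohenLenstraConst u) :=
    (Equiv.prodComm ℕ Nat.Primes).hasProd_iff.2 (hasProd_cohenLenstraConst hu)
  exact hswap.prod_fiberwise fun k => hasProd_one_sub_prime_pow_inv (s := k + u + 1) (by omega)

lemma cohenLenstraConst_pos (hu : u ≠ 0) : 0 < cohenLenstraConst u := by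
  refine lt_of_le_of_ne ?_ (Ne.symm ?_)
  · exact ge_of_tendsto' (hasProd_inv_zeta_cohenLenstraConst hu).tendsto_prod_nat fun n =>
      Finset.prod_nonneg fun k _ => inv_nonneg.2 (tsum_nonneg fun _ => by positivity)
  · rw [← (hasProd_cohenLenstraConst hu).tprod_eq]
    simp only [sub_eq_add_neg]
    refine tprod_one_add_ne_zero_of_summable (fun x => ?_) (summable_prime_pow_inv hu).neg.norm
    rw [← sub_eq_add_neg]
    exact (one_sub_prime_pow_inv_pos x.1 (Nat.succ_ne_zero _)).ne'

end CohenLenstraConstant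

section InvPow

/-- The weight `k⁻ˢ` of a group of order `k`. It is `0` for `k = 0` and `s ≠ 0`, so that infinite
groups, which have `Nat.card = 0`, do not contribute to weighted counts. -/
def invPow (k s : ℕ) : ℝ≥0∞ := ENNReal.ofReal ((k : ℝ) ^ s)⁻¹

/-- The value `ζ(s)` of the Riemann zeta function, as an extended nonnegative real. -/
def natZeta (s : ℕ) : ℝ≥0∞ := ∑' d : ℕ, invPow d s

@[simp]
lemma invPow_one_left (s : ℕ) : invPow 1 s = 1 := by simp [invPow]

lemma invPow_ne_top (k s : ℕ) : invPow k s ≠ ∞ := ENNReal.ofReal_ne_top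

lemma invPow_zero_left {s : ℕ} (hs : s ≠ 0) : invPow 0 s = 0 := by simp [invPow, hs]

lemma invPow_mul (k l s : ℕ) : invPow (k * l) s = invPow k s * invPow l s := by
  rw [invPow, Nat.cast_mul, mul_pow, mul_inv, ENNReal.ofReal_mul (by positivity), invPow, invPow]

lemma invPow_add (k s t : ℕ) : invPow k (s + t) = invPow k s * invPow k t := by
  rw [invPow, pow_add, mul_inv, ENNReal.ofReal_mul (by positivity), invPow, invPow]

lemma natCast_pow_mul_invPow (m k s : ℕ) :
    (m : ℝ≥0∞) ^ s * invPow k s = ENNReal.ofReal (m / k) ^ s := by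
  rw [invPow, ← ENNReal.ofReal_natCast, ← ENNReal.ofReal_pow (by positivity),
    ← ENNReal.ofReal_pow (by positivity), ← ENNReal.ofReal_mul (by positivity), div_pow,
    div_eq_mul_inv]

lemma natCast_pow_mul_invPow_self {k : ℕ} (hk : k ≠ 0) (s : ℕ) :
    (k : ℝ≥0∞) ^ s * invPow k s = 1 := by
  rw [natCast_pow_mul_invPow, div_self (by exact_mod_cast hk), ENNReal.ofReal_one, one_pow]

lemma natZeta_eq_tsum_pnat {s : ℕ} (hs : s ≠ 0) : natZeta s = ∑' d : ℕ+, invPow d s := by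
  rw [natZeta, ← PNat.coe_injective.tsum_eq]
  intro d hd
  refine ⟨⟨d, Nat.pos_of_ne_zero ?_⟩, rfl⟩
  rintro rfl
  exact hd (invPow_zero_left hs)

lemma natZeta_eq_ofReal {s : ℕ} (hs : 1 < s) :
    natZeta s = ENNReal.ofReal (∑' n : ℕ, ((n : ℝ) ^ s)⁻¹) :=
  (ENNReal.ofReal_tsum_of_nonneg (fun _ => by positivity) (Real.summable_nat_pow_inv.2 hs)).symm

lemma tendsto_prod_natZeta {u : ℕ} (hu : u ≠ 0) :
    Tendsto (fun n => ∏ k ∈ Finset.range n, natZeta (k + u + 1)) atTop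
      (𝓝 (ENNReal.ofReal (cohenLenstraConst u)⁻¹)) := by
  have hprod := (hasProd_inv_zeta_cohenLenstraConst hu).tendsto_prod_nat
  refine ((ENNReal.continuous_ofReal.tendsto _).comp
    (hprod.inv₀ (cohenLenstraConst_pos hu).ne')).congr fun n => ?_
  rw [Function.comp_apply, Finset.prod_inv_distrib, inv_inv,
    ENNReal.ofReal_prod_of_nonneg fun _ _ => tsum_nonneg fun _ => by positivity]
  exact Finset.prod_congr rfl fun k _ => (natZeta_eq_ofReal (by omega)).symm

end InvPow

section SubgroupZeta

/-- The zeta function `∑ [A : L]⁻ˢ` counting the finite index subgroups of `A`. -/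
def subgroupZeta (A : Type*) [AddCommGroup A] (s : ℕ) : ℝ≥0∞ :=
  ∑' L : AddSubgroup A, invPow L.index s

lemma subgroupZeta_congr {A B : Type*} [AddCommGroup A] [AddCommGroup B] (e : A ≃+ B) (s : ℕ) :
    subgroupZeta A s = subgroupZeta B s := by
  rw [subgroupZeta, subgroupZeta, ← e.mapAddSubgroup.toEquiv.tsum_eq]
  refine tsum_congr fun L => ?_
  exact congrArg (invPow · s) (L.index_map_equiv e).symm

lemma subgroupZeta_of_subsingleton (A : Type*) [AddCommGroup A] [Subsingleton A] (s : ℕ) :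
    subgroupZeta A s = 1 := by
  rw [subgroupZeta, tsum_eq_single ⊥ fun L hL => (hL (Subsingleton.elim _ _)).elim]
  simp

lemma tsum_le_invPow_index {A : Type*} [AddCommGroup A] (K : AddSubgroup A) (s : ℕ) :
    ∑' L : {L : AddSubgroup A // L ≤ K}, invPow L.1.index s =
      invPow K.index s * subgroupZeta K s := by
  rw [subgroupZeta, ← ENNReal.tsum_mul_left, ← (AddSubgroup.MapSubtype.orderIso K).toEquiv.tsum_eq]
  refine tsum_congr fun M => ?_
  rw [mul_comm, ← invPow_mul]
  exact congrArg (invPow · s) (AddSubgroup.index_map_subtype M)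

lemma index_eq_index_comap_inl_mul_index_map_snd {A B : Type*} [AddCommGroup A] [AddCommGroup B]
    (M : AddSubgroup (A × B)) :
    M.index = (M.comap (AddMonoidHom.inl A B)).index * (M.map (AddMonoidHom.snd A B)).index := by
  have hker : (AddMonoidHom.snd A B).ker = (AddMonoidHom.inl A B).range := by
    ext ⟨a, b⟩
    simp [AddSubgroup.mem_prod, eq_comm]
  have hrange : (AddMonoidHom.snd A B).range = ⊤ :=
    AddMonoidHom.range_eq_top.2 Prod.snd_surjective
  rw [AddSubgroup.index_comap, AddSubgroup.index_map, hrange, AddSubgroup.index_top, mul_one,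
    ← hker, ← AddSubgroup.relIndex_sup_left, AddSubgroup.relIndex_mul_index le_sup_left]

lemma int_zmultiples_index (K : AddSubgroup ℤ) : AddSubgroup.zmultiples (K.index : ℤ) = K := by
  obtain ⟨g, rfl⟩ := Int.subgroup_cyclic K
  rw [← AddSubgroup.zmultiples_eq_closure, Int.index_zmultiples, Int.zmultiples_natAbs]

variable {A : Type*} [AddCommGroup A]

/-- The subgroup of `A × ℤ` generated by `L × 0` and `(a, d)`, which depends only on the class `v`
of `a` modulo `L`. For `d > 0` these are the finite index subgroups of `A × ℤ` as `L` runs over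
those of `A` (the Hermite normal form). -/
def extendSubgroup (L : AddSubgroup A) (d : ℕ) (v : A ⧸ L) : AddSubgroup (A × ℤ) where
  carrier := {x | ∃ k : ℤ, (x.1 : A ⧸ L) = k • v ∧ k * d = x.2}
  zero_mem' := ⟨0, by simp⟩
  add_mem' := by
    rintro x y ⟨k, hk, hkd⟩ ⟨l, hl, hld⟩
    exact ⟨k + l, by simp [hk, hl, add_smul], by simp [← hkd, ← hld, add_mul]⟩
  neg_mem' := by
    rintro x ⟨k, hk, hkd⟩
    exact ⟨-k, by simp [hk], by simp [← hkd]⟩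

lemma mem_extendSubgroup {L : AddSubgroup A} {d : ℕ} {v : A ⧸ L} {x : A × ℤ} :
    x ∈ extendSubgroup L d v ↔ ∃ k : ℤ, (x.1 : A ⧸ L) = k • v ∧ k * d = x.2 :=
  Iff.rfl

lemma comap_inl_extendSubgroup (L : AddSubgroup A) {d : ℕ} (hd : d ≠ 0) (v : A ⧸ L) :
    (extendSubgroup L d v).comap (AddMonoidHom.inl A ℤ) = L := by
  ext a
  simp [mem_extendSubgroup, hd]

lemma map_snd_extendSubgroup (L : AddSubgroup A) (d : ℕ) (v : A ⧸ L) :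
    (extendSubgroup L d v).map (AddMonoidHom.snd A ℤ) = AddSubgroup.zmultiples (d : ℤ) := by
  obtain ⟨a, rfl⟩ := QuotientAddGroup.mk_surjective v
  ext z
  constructor
  · rintro ⟨x, ⟨k, -, hk⟩, rfl⟩
    exact ⟨k, by simpa using hk⟩
  · rintro ⟨k, rfl⟩
    exact ⟨(k • a, k • (d : ℤ)), ⟨k, rfl, rfl⟩, rfl⟩

lemma index_map_snd_extendSubgroup (L : AddSubgroup A) (d : ℕ) (v : A ⧸ L) :
    ((extendSubgroup L d v).map (AddMonoidHom.snd A ℤ)).index = d := by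
  rw [map_snd_extendSubgroup, Int.index_zmultiples, Int.natAbs_natCast]

lemma index_extendSubgroup (L : AddSubgroup A) {d : ℕ} (hd : d ≠ 0) (v : A ⧸ L) :
    (extendSubgroup L d v).index = L.index * d := by
  rw [index_eq_index_comap_inl_mul_index_map_snd, comap_inl_extendSubgroup L hd,
    index_map_snd_extendSubgroup]

lemma mk_mem_extendSubgroup_iff {L : AddSubgroup A} {d : ℕ} (hd : d ≠ 0) {v : A ⧸ L} {a : A} :
    (a, (d : ℤ)) ∈ extendSubgroup L d v ↔ (a : A ⧸ L) = v := by
  simp [mem_extendSubgroup, hd]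

lemma extendSubgroup_injective :
    Function.Injective fun x : (L : AddSubgroup A) × ℕ+ × (A ⧸ L) =>
      extendSubgroup x.1 x.2.1 x.2.2 := by
  rintro ⟨L, d, v⟩ ⟨L', d', v'⟩ h
  dsimp only at h
  obtain rfl : L = L' := by
    rw [← comap_inl_extendSubgroup L d.ne_zero v, h, comap_inl_extendSubgroup L' d'.ne_zero v']
  obtain rfl : d = d' := PNat.coe_injective <| by
    rw [← index_map_snd_extendSubgroup L d v, h, index_map_snd_extendSubgroup]
  obtain ⟨a, rfl⟩ := QuotientAddGroup.mk_surjective v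
  rw [(mk_mem_extendSubgroup_iff d.ne_zero).1 (h ▸ (mk_mem_extendSubgroup_iff d.ne_zero).2 rfl)]

lemma extendSubgroup_comap_inl {M : AddSubgroup (A × ℤ)} {d : ℕ} {a : A}
    (hM : M.map (AddMonoidHom.snd A ℤ) = AddSubgroup.zmultiples (d : ℤ))
    (ha : (a, (d : ℤ)) ∈ M) :
    extendSubgroup (M.comap (AddMonoidHom.inl A ℤ)) d (a : A ⧸ _) = M := by
  have hmem (b : A) (k : ℤ) :
      (b : A ⧸ M.comap (AddMonoidHom.inl A ℤ)) = k • (a : A ⧸ _) ↔ (b, k * (d : ℤ)) ∈ M := by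
    rw [← QuotientAddGroup.mk_zsmul, QuotientAddGroup.eq, ← neg_mem_iff, AddSubgroup.mem_comap,
      ← AddSubgroup.add_mem_cancel_right M (M.zsmul_mem ha k)]
    simp
  ext ⟨b, z⟩
  simp only [mem_extendSubgroup, hmem]
  refine ⟨fun ⟨_, hk, hkd⟩ => hkd ▸ hk, fun hz => ?_⟩
  obtain ⟨k, rfl⟩ : z ∈ AddSubgroup.zmultiples (d : ℤ) := hM ▸ ⟨_, hz, rfl⟩
  exact ⟨k, hz, rfl⟩

lemma exists_extendSubgroup_eq (M : AddSubgroup (A × ℤ)) (hM : M.index ≠ 0) :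
    ∃ x : (L : AddSubgroup A) × ℕ+ × (A ⧸ L), extendSubgroup x.1 x.2.1 x.2.2 = M := by
  set d := (M.map (AddMonoidHom.snd A ℤ)).index
  have hd0 : d ≠ 0 := right_ne_zero_of_mul (index_eq_index_comap_inl_mul_index_map_snd M ▸ hM)
  have hmap : M.map (AddMonoidHom.snd A ℤ) = AddSubgroup.zmultiples (d : ℤ) :=
    (int_zmultiples_index _).symm
  obtain ⟨⟨a, z⟩, ha, rfl : z = d⟩ := hmap ▸ AddSubgroup.mem_zmultiples (d : ℤ)
  exact ⟨⟨_, ⟨d, Nat.pos_of_ne_zero hd0⟩, a⟩, extendSubgroup_comap_inl hmap ha⟩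

lemma card_quotient_mul_invPow_succ (L : AddSubgroup A) {s : ℕ} (hs : s ≠ 0) :
    (ENat.card (A ⧸ L) : ℝ≥0∞) * invPow L.index (s + 1) = invPow L.index s := by
  obtain h0 | h0 := eq_or_ne L.index 0
  · simp [h0, invPow_zero_left, hs]
  · have : Finite (A ⧸ L) := Nat.finite_of_card_ne_zero (L.index_eq_card ▸ h0)
    rw [ENat.card_eq_coe_natCard, ← L.index_eq_card, add_comm, invPow_add, ← mul_assoc]
    simpa using congrArg (· * invPow L.index s) (natCast_pow_mul_invPow_self h0 1)

lemma subgroupZeta_prod_int {s : ℕ} (hs : s ≠ 0) :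
    subgroupZeta (A × ℤ) (s + 1) = natZeta (s + 1) * subgroupZeta A s := by
  have hsupp : (Function.support fun M : AddSubgroup (A × ℤ) => invPow M.index (s + 1)) ⊆
      Set.range fun x : (L : AddSubgroup A) × ℕ+ × (A ⧸ L) => extendSubgroup x.1 x.2.1 x.2.2 := by
    intro M hM
    refine exists_extendSubgroup_eq M fun h => hM ?_
    simp only [h, invPow_zero_left s.succ_ne_zero]
  rw [subgroupZeta, ← extendSubgroup_injective.tsum_eq hsupp, ENNReal.tsum_sigma', subgroupZeta,
    ← ENNReal.tsum_mul_left]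
  refine tsum_congr fun L => ?_
  calc ∑' x : ℕ+ × (A ⧸ L), invPow (extendSubgroup L x.1 x.2).index (s + 1)
      = ∑' (d : ℕ+) (_ : A ⧸ L), invPow L.index (s + 1) * invPow d (s + 1) := by
        simp only [index_extendSubgroup _ (PNat.ne_zero _), invPow_mul]
        exact ENNReal.tsum_prod (f := fun (d : ℕ+) (_ : A ⧸ L) =>
          invPow L.index (s + 1) * invPow d (s + 1))
    _ = natZeta (s + 1) * (ENat.card (A ⧸ L) * invPow L.index (s + 1)) := by
        simp only [ENNReal.tsum_const, ENNReal.tsum_mul_left,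
          ← natZeta_eq_tsum_pnat s.succ_ne_zero]
        ring
    _ = natZeta (s + 1) * invPow L.index s := by rw [card_quotient_mul_invPow_succ L hs]

lemma subgroupZeta_int_pow {u : ℕ} (hu : u ≠ 0) (n : ℕ) :
    subgroupZeta (Fin n → ℤ) (n + u) = ∏ k ∈ Finset.range n, natZeta (k + u + 1) := by
  induction n with
  | zero => simp [subgroupZeta_of_subsingleton]
  | succ n ih =>
    let e : (Fin n → ℤ) × ℤ ≃+ (Fin (n + 1) → ℤ) :=
      AddEquiv.prodComm.trans (Fin.consLinearEquiv ℤ fun _ => ℤ).toAddEquiv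
    rw [← subgroupZeta_congr e, Nat.add_right_comm, subgroupZeta_prod_int (by omega), ih,
      Finset.prod_range_succ, mul_comm]

end SubgroupZeta

section Surjections

lemma natCast_card_eq_tsum_one (α : Type*) [Finite α] : (Nat.card α : ℝ≥0∞) = ∑' _ : α, 1 := by
  rw [ENNReal.tsum_one, ENat.card_eq_coe_natCard, ENat.toENNReal_coe]

lemma nSur_congr_left {A B : Type*} [AddCommGroup A] [AddCommGroup B] (e : A ≃+ B)
    (G : Type*) [AddCommGroup G] : nSur A G = nSur B G :=
  Nat.card_congr <| e.addMonoidHomCongrLeftEquiv.subtypeEquiv fun f =>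
    (EquivLike.surjective_comp e.symm f).symm

variable {A : Type*} [AddCommGroup A]

/-- A surjection `A → H` amounts to a subgroup `L` of `A`, namely its kernel, together with an
isomorphism `A ⧸ L ≃+ H`. -/
def sigmaQuotientEquivSurjection (A H : Type*) [AddCommGroup A] [AddCommGroup H] :
    ((L : AddSubgroup A) × (A ⧸ L ≃+ H)) ≃ {f : A →+ H // Function.Surjective f} :=
  Equiv.ofBijective
    (fun x => ⟨x.2.toAddMonoidHom.comp (QuotientAddGroup.mk' x.1),
      x.2.surjective.comp QuotientAddGroup.mk_surjective⟩) <| by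
    constructor
    · rintro ⟨L, e⟩ ⟨L', e'⟩ h
      have happly (a : A) : e (a : A ⧸ L) = e' (a : A ⧸ L') :=
        DFunLike.congr_fun (congrArg Subtype.val h) a
      obtain rfl : L = L' := by
        ext a
        rw [← QuotientAddGroup.eq_zero_iff, ← e.map_eq_zero_iff, happly, e'.map_eq_zero_iff,
          QuotientAddGroup.eq_zero_iff]
      congr 1
      ext q
      obtain ⟨a, rfl⟩ := QuotientAddGroup.mk_surjective q
      exact happly a
    · exact fun ⟨f, hf⟩ => ⟨⟨f.ker, QuotientAddGroup.quotientKerEquivOfSurjective f hf⟩, rfl⟩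

lemma natCast_nSur_eq_tsum_card_addEquiv (A H : Type*) [AddCommGroup A] [AddCommGroup H]
    [Finite (A →+ H)] :
    (nSur A H : ℝ≥0∞) = ∑' L : AddSubgroup A, (ENat.card (A ⧸ L ≃+ H) : ℝ≥0∞) := by
  rw [nSur, natCast_card_eq_tsum_one, ← (sigmaQuotientEquivSurjection A H).tsum_eq,
    ENNReal.tsum_sigma']
  simp only [ENNReal.tsum_one]

lemma card_addEquiv_mul_inv_card_addAut {B H : Type*} [AddCommGroup B] [AddCommGroup H]
    [Finite (AddAut H)] (e : B ≃+ H) :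
    (ENat.card (B ≃+ H) : ℝ≥0∞) * (Nat.card (AddAut H) : ℝ≥0∞)⁻¹ = 1 := by
  let precomp : (B ≃+ H) ≃ AddAut H :=
    { toFun := fun f => e.symm.trans f
      invFun := fun f => e.trans f
      left_inv := fun f => by ext; simp
      right_inv := fun f => by ext; simp }
  rw [ENat.card_congr precomp, ENat.card_eq_coe_natCard, ENat.toENNReal_coe]
  exact ENNReal.mul_inv_cancel (by exact_mod_cast Nat.card_pos.ne') (ENNReal.natCast_ne_top _)

lemma tsum_nSur_mul_inv_card_addAut_mul {ι : Type*} {H : ι → Type*} [∀ i, AddCommGroup (H i)]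
    [∀ i, Finite (AddAut (H i))] [∀ i, Finite (A →+ H i)]
    (hH : ∀ L : AddSubgroup A, L.index ≠ 0 → ∃! i, Nonempty (A ⧸ L ≃+ H i))
    {w : ι → ℝ≥0∞} {W : AddSubgroup A → ℝ≥0∞} (hw : ∀ L i, (A ⧸ L ≃+ H i) → w i = W L)
    (hW : ∀ L, L.index = 0 → W L = 0) :
    ∑' i, (nSur A (H i) : ℝ≥0∞) * (Nat.card (AddAut (H i)) : ℝ≥0∞)⁻¹ * w i = ∑' L, W L := by
  simp only [natCast_nSur_eq_tsum_card_addEquiv, ← ENNReal.tsum_mul_right]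
  rw [ENNReal.tsum_comm]
  refine tsum_congr fun L => ?_
  have hterm (i) (e : A ⧸ L ≃+ H i) : (ENat.card (A ⧸ L ≃+ H i) : ℝ≥0∞) *
      (Nat.card (AddAut (H i)) : ℝ≥0∞)⁻¹ * w i = W L := by
    rw [card_addEquiv_mul_inv_card_addAut e, one_mul, hw L i e]
  have hterm_zero (i) (hi : ¬Nonempty (A ⧸ L ≃+ H i)) : (ENat.card (A ⧸ L ≃+ H i) : ℝ≥0∞) *
      (Nat.card (AddAut (H i)) : ℝ≥0∞)⁻¹ * w i = 0 := by
    rw [(ENat.card_eq_zero_iff_empty _).2 (not_nonempty_iff.1 hi), ENat.toENNReal_zero, zero_mul,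
      zero_mul]
  obtain h0 | h0 := eq_or_ne L.index 0
  · rw [hW L h0, ENNReal.tsum_eq_zero]
    intro i
    by_cases hi : Nonempty (A ⧸ L ≃+ H i)
    · rw [hterm i hi.some, hW L h0]
    · exact hterm_zero i hi
  · obtain ⟨i, ⟨e⟩, huniq⟩ := hH L h0
    rw [tsum_eq_single i fun j hj => hterm_zero j fun hj' => hj (huniq j hj'), hterm i e]

/-- Surjections from `A ⧸ L` are the surjections from `A` that vanish on `L`. -/
def quotientSurjectionEquiv (L : AddSubgroup A) (G : Type*) [AddCommGroup G] :
    {g : A ⧸ L →+ G // Function.Surjective g} ≃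
      {f : {f : A →+ G // Function.Surjective f} // L ≤ f.1.ker} where
  toFun g := ⟨⟨g.1.comp (QuotientAddGroup.mk' L), g.2.comp QuotientAddGroup.mk_surjective⟩,
    fun a ha => by simp [AddMonoidHom.mem_ker, (QuotientAddGroup.eq_zero_iff a).2 ha]⟩
  invFun f := ⟨QuotientAddGroup.lift L f.1.1 f.2,
    QuotientAddGroup.lift_surjective_of_surjective L f.1.1 f.1.2 f.2⟩
  left_inv _ := Subtype.ext <| QuotientAddGroup.addMonoidHom_ext _ rfl
  right_inv _ := rfl

lemma tsum_nSur_quotient_mul {G : Type*} [AddCommGroup G] [Finite (A →+ G)]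
    (W : AddSubgroup A → ℝ≥0∞) :
    ∑' L : AddSubgroup A, (nSur (A ⧸ L) G : ℝ≥0∞) * W L =
      ∑' f : {f : A →+ G // Function.Surjective f}, ∑' L : {L : AddSubgroup A // L ≤ f.1.ker},
        W L := by
  let e : ((L : AddSubgroup A) × {g : A ⧸ L →+ G // Function.Surjective g}) ≃
      (f : {f : A →+ G // Function.Surjective f}) × {L : AddSubgroup A // L ≤ f.1.ker} :=
    (Equiv.sigmaCongrRight fun L => quotientSurjectionEquiv L G).trans
      { toFun := fun x => ⟨x.2.1, x.1, x.2.2⟩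
        invFun := fun x => ⟨x.2.1, x.1, x.2.2⟩
        left_inv := fun _ => rfl
        right_inv := fun _ => rfl }
  have hcard (L : AddSubgroup A) : (nSur (A ⧸ L) G : ℝ≥0∞) * W L =
      ∑' _ : {g : A ⧸ L →+ G // Function.Surjective g}, W L := by
    have := Finite.of_equiv _ (quotientSurjectionEquiv L G).symm
    simp only [nSur, natCast_card_eq_tsum_one, ← ENNReal.tsum_mul_right, one_mul]
  calc ∑' L : AddSubgroup A, (nSur (A ⧸ L) G : ℝ≥0∞) * W L
      = ∑' x : (L : AddSubgroup A) × {g : A ⧸ L →+ G // Function.Surjective g}, W x.1 := by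
        simp only [hcard, ENNReal.tsum_sigma']
    _ = ∑' x : (f : {f : A →+ G // Function.Surjective f}) × {L : AddSubgroup A // L ≤ f.1.ker},
          W x.2 := e.tsum_eq fun x => W x.2
    _ = _ := ENNReal.tsum_sigma' _

end Surjections

section GenerationProbability

/-- A homomorphism from `ℤⁿ` is determined by the images of the standard basis vectors. -/
def intPowHomEquiv (n : ℕ) (H : Type*) [AddCommGroup H] : ((Fin n → ℤ) →+ H) ≃ (Fin n → H) :=
  ((addMonoidHomLequivInt ℤ).trans ((Pi.basisFun ℤ (Fin n)).constr ℤ).symm).toEquiv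

instance finite_intPow_hom (n : ℕ) (H : Type*) [AddCommGroup H] [Finite H] :
    Finite ((Fin n → ℤ) →+ H) :=
  Finite.of_equiv _ (intPowHomEquiv n H).symm

lemma card_intPow_hom (n : ℕ) (H : Type*) [AddCommGroup H] :
    Nat.card ((Fin n → ℤ) →+ H) = Nat.card H ^ n := by
  rw [Nat.card_congr (intPowHomEquiv n H), Nat.card_fun, Nat.card_fin]

lemma nSur_le_card_hom (A H : Type*) [AddCommGroup A] [AddCommGroup H] [Finite (A →+ H)] :
    nSur A H ≤ Nat.card (A →+ H) :=
  Nat.card_le_card_of_injective _ Subtype.val_injective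

lemma card_hom_le_nSur_add_sum (A H : Type*) [AddCommGroup A] [AddCommGroup H]
    [Fintype {M : AddSubgroup H // M ≠ ⊤}] [Finite (A →+ H)] :
    Nat.card (A →+ H) ≤ nSur A H + ∑ M : {M : AddSubgroup H // M ≠ ⊤}, Nat.card (A →+ M.1) := by
  have (M : AddSubgroup H) : Finite (A →+ M) :=
    Finite.of_injective (M.subtype.comp ·) fun f g h =>
      AddMonoidHom.ext fun a => M.subtype_injective (DFunLike.congr_fun h a)
  rw [← Nat.card_sigma, nSur, ← Nat.card_sum]
  refine Nat.card_le_card_of_surjective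
    (Sum.elim Subtype.val fun x : (M : {M : AddSubgroup H // M ≠ ⊤}) × (A →+ M.1) =>
      x.1.1.subtype.comp x.2) fun f => ?_
  by_cases hf : Function.Surjective f
  · exact ⟨.inl ⟨f, hf⟩, rfl⟩
  · exact ⟨.inr ⟨⟨f.range, fun h => hf (AddMonoidHom.range_eq_top.1 h)⟩, f.rangeRestrict⟩, rfl⟩

/-- The probability that `n` independent uniformly random elements of `H` generate `H`. -/
def generationProb (n : ℕ) (H : Type*) [AddCommGroup H] : ℝ≥0∞ :=
  nSur (Fin n → ℤ) H * invPow (Nat.card H) n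

variable (H : Type*) [AddCommGroup H] [Finite H]

lemma generationProb_le_one (n : ℕ) : generationProb n H ≤ 1 := by
  rw [generationProb, ← natCast_pow_mul_invPow_self (Nat.card_pos (α := H)).ne' n]
  gcongr
  exact_mod_cast (nSur_le_card_hom _ _).trans_eq (card_intPow_hom n H)

lemma one_le_generationProb_add_sum (n : ℕ) [Fintype {M : AddSubgroup H // M ≠ ⊤}] :
    1 ≤ generationProb n H + ∑ M : {M : AddSubgroup H // M ≠ ⊤},
      ENNReal.ofReal (Nat.card M.1 / Nat.card H) ^ n := by
  have hcard := card_hom_le_nSur_add_sum (Fin n → ℤ) H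
  simp only [card_intPow_hom] at hcard
  simp only [← natCast_pow_mul_invPow_self (Nat.card_pos (α := H)).ne' n,
    ← natCast_pow_mul_invPow, generationProb, ← Finset.sum_mul, ← add_mul]
  gcongr
  exact_mod_cast hcard

lemma tendsto_generationProb : Tendsto (generationProb · H) atTop (𝓝 1) := by
  have := Fintype.ofFinite {M : AddSubgroup H // M ≠ ⊤}
  have hlt (M : {M : AddSubgroup H // M ≠ ⊤}) :
      ENNReal.ofReal (Nat.card M.1 / Nat.card H) < 1 := by
    rw [ENNReal.ofReal_lt_one, div_lt_one (by exact_mod_cast Nat.card_pos), Nat.cast_lt]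
    exact (AddSubgroup.card_le_card_addGroup M.1).lt_of_ne
      fun h => M.2 (AddSubgroup.eq_top_of_card_eq M.1 h)
  have hsum : Tendsto (fun n => ∑ M : {M : AddSubgroup H // M ≠ ⊤},
      ENNReal.ofReal (Nat.card M.1 / Nat.card H) ^ n) atTop (𝓝 0) := by
    simpa using tendsto_finsetSum Finset.univ fun M _ =>
      ENNReal.tendsto_pow_atTop_nhds_zero_of_lt_one (hlt M)
  have hlower : Tendsto (fun n => 1 - ∑ M : {M : AddSubgroup H // M ≠ ⊤},
      ENNReal.ofReal (Nat.card M.1 / Nat.card H) ^ n) atTop (𝓝 1) := by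
    simpa using ENNReal.Tendsto.sub tendsto_const_nhds hsum (Or.inl ENNReal.one_ne_top)
  exact tendsto_of_tendsto_of_tendsto_of_le_of_le hlower tendsto_const_nhds
    (fun n => tsub_le_iff_right.2 (one_le_generationProb_add_sum H n))
    fun n => generationProb_le_one H n

end GenerationProbability

section CohenLenstraMoments

/-- The unnormalised weight `1 / (|H|ᵘ |Aut H|)` of `H` in the Cohen–Lenstra distribution with
parameter `u`. -/
def cohenLenstraWeight (u : ℕ) (H : Type*) [AddCommGroup H] : ℝ≥0∞ :=
  (Nat.card (AddAut H) : ℝ≥0∞)⁻¹ * invPow (Nat.card H) u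

lemma toReal_cohenLenstraWeight (u : ℕ) (H : Type*) [AddCommGroup H] :
    (cohenLenstraWeight u H).toReal = ((Nat.card H : ℝ) ^ u * Nat.card (AddAut H))⁻¹ := by
  simp [cohenLenstraWeight, invPow]

lemma nonempty_addEquiv_of_index_ne_zero {A : Type*} [AddCommGroup A] [Module.Free ℤ A]
    [Module.Finite ℤ A] (K : AddSubgroup A) (hK : K.index ≠ 0) : Nonempty (K ≃+ A) := by
  have : K.FiniteIndex := ⟨hK⟩
  have : Module.Free ℤ K := inferInstanceAs (Module.Free ℤ K.toIntSubmodule)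
  have : Module.Finite ℤ K := inferInstanceAs (Module.Finite ℤ K.toIntSubmodule)
  exact ⟨(LinearEquiv.ofFinrankEq K A (AddSubgroup.finrank_eq_of_finiteIndex K)).toAddEquiv⟩

lemma tsum_le_ker_invPow_index {A G : Type*} [AddCommGroup A] [Module.Free ℤ A]
    [Module.Finite ℤ A] [AddCommGroup G] [Finite G] {f : A →+ G} (hf : Function.Surjective f)
    (s : ℕ) :
    ∑' L : {L : AddSubgroup A // L ≤ f.ker}, invPow L.1.index s =
      invPow (Nat.card G) s * subgroupZeta A s := by
  have hindex : f.ker.index = Nat.card G := by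
    rw [AddSubgroup.index_ker, AddMonoidHom.range_eq_top.2 hf, AddSubgroup.card_top]
  obtain ⟨e⟩ := nonempty_addEquiv_of_index_ne_zero f.ker (hindex ▸ Nat.card_pos.ne')
  rw [tsum_le_invPow_index, hindex, subgroupZeta_congr e]

lemma tsum_eq_of_tendsto_one {ι : Type*} {c : ι → ℝ≥0∞} {r : ℕ → ι → ℝ≥0∞} {R : ℝ≥0∞}
    (hr : ∀ n i, r n i ≤ 1) (hlim : ∀ i, Tendsto (r · i) atTop (𝓝 1))
    (hR : Tendsto (fun n => ∑' i, r n i * c i) atTop (𝓝 R)) : ∑' i, c i = R := by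
  refine le_antisymm ?_ (le_of_tendsto' hR fun n => ENNReal.tsum_le_tsum fun i =>
    mul_le_of_le_one_left' (hr n i))
  rw [ENNReal.tsum_eq_iSup_sum]
  refine iSup_le fun F => le_of_tendsto_of_tendsto' ?_ hR fun n => ENNReal.sum_le_tsum F
  refine tendsto_finsetSum _ fun i _ => ?_
  simpa using ENNReal.Tendsto.mul_const (hlim i) (Or.inl one_ne_zero)

variable {u : ℕ} {ι : Type*} {H : ι → Type*} [∀ i, AddCommGroup (H i)] [∀ i, Finite (H i)]

lemma tsum_generationProb_mul (hu : u ≠ 0)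
    (hH : ∀ (K : Type) [AddCommGroup K] [Finite K], ∃! i, Nonempty (K ≃+ H i))
    (G : Type*) [AddCommGroup G] [Finite G] (n : ℕ) :
    ∑' i, generationProb n (H i) * (cohenLenstraWeight u (H i) * nSur (H i) G) =
      generationProb n G *
        (invPow (Nat.card G) u * ∏ k ∈ Finset.range n, natZeta (k + u + 1)) := by
  have (i : ι) : Finite (AddAut (H i)) := inferInstanceAs (Finite (H i ≃+ H i))
  calc ∑' i, generationProb n (H i) * (cohenLenstraWeight u (H i) * nSur (H i) G)
      = ∑' i, (nSur (Fin n → ℤ) (H i) : ℝ≥0∞) * (Nat.card (AddAut (H i)) : ℝ≥0∞)⁻¹ *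
          (nSur (H i) G * invPow (Nat.card (H i)) (n + u)) :=
        tsum_congr fun i => by
          rw [generationProb, cohenLenstraWeight, invPow_add]
          ring
    _ = ∑' L : AddSubgroup (Fin n → ℤ), nSur ((Fin n → ℤ) ⧸ L) G * invPow L.index (n + u) := by
        refine tsum_nSur_mul_inv_card_addAut_mul (fun L hL => ?_) (fun L i e => ?_) fun L hL => ?_
        · have : Finite ((Fin n → ℤ) ⧸ L) := Nat.finite_of_card_ne_zero (L.index_eq_card ▸ hL)
          exact hH _
        · rw [nSur_congr_left e, L.index_eq_card, Nat.card_congr e.toEquiv]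
        · rw [hL, invPow_zero_left (by omega), mul_zero]
    _ = ∑' f : {f : (Fin n → ℤ) →+ G // Function.Surjective f},
          ∑' L : {L : AddSubgroup (Fin n → ℤ) // L ≤ f.1.ker}, invPow L.1.index (n + u) :=
        tsum_nSur_quotient_mul _
    _ = nSur (Fin n → ℤ) G *
          (invPow (Nat.card G) (n + u) * subgroupZeta (Fin n → ℤ) (n + u)) := by
        simp only [fun f : {f : (Fin n → ℤ) →+ G // Function.Surjective f} =>
          tsum_le_ker_invPow_index f.2 (n + u), ENNReal.tsum_const, ENat.card_eq_coe_natCard,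
          ENat.toENNReal_coe, nSur]
    _ = _ := by
        rw [subgroupZeta_int_pow hu, generationProb, invPow_add]
        ring

lemma tsum_cohenLenstraWeight_mul_nSur (hu : u ≠ 0)
    (hH : ∀ (K : Type) [AddCommGroup K] [Finite K], ∃! i, Nonempty (K ≃+ H i))
    (G : Type*) [AddCommGroup G] [Finite G] :
    ∑' i, cohenLenstraWeight u (H i) * nSur (H i) G =
      invPow (Nat.card G) u * ENNReal.ofReal (cohenLenstraConst u)⁻¹ := by
  refine tsum_eq_of_tendsto_one (fun n i => generationProb_le_one (H i) n)
    (fun i => tendsto_generationProb (H i)) ?_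
  simp only [tsum_generationProb_mul hu hH G]
  have hzeta := ENNReal.Tendsto.const_mul (tendsto_prod_natZeta hu)
    (Or.inr (invPow_ne_top (Nat.card G) u))
  simpa only [one_mul] using ENNReal.Tendsto.mul (tendsto_generationProb G) (Or.inl one_ne_zero)
    hzeta (Or.inr ENNReal.one_ne_top)

theorem expected_surjections_cohen_lenstra_general (hu : u ≠ 0)
    (hirr : ∀ i j : ι, Nonempty (H i ≃+ H j) → i = j)
    (hcompl : ∀ (K : Type) [AddCommGroup K] [Finite K], ∃ i, Nonempty (H i ≃+ K))
    (G : Type*) [AddCommGroup G] [Finite G] :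
    HasSum
      (fun i => cohenLenstraConst u / ((Nat.card (H i) : ℝ) ^ u * (Nat.card (AddAut (H i)) : ℝ)) *
        (nSur (H i) G : ℝ))
      (1 / (Nat.card G : ℝ) ^ u) := by
  have hH (K : Type) [AddCommGroup K] [Finite K] : ∃! i, Nonempty (K ≃+ H i) := by
    obtain ⟨i, ⟨e⟩⟩ := hcompl K
    exact ⟨i, ⟨e.symm⟩, fun j ⟨e'⟩ => hirr j i ⟨e'.symm.trans e.symm⟩⟩
  have htsum := tsum_cohenLenstraWeight_mul_nSur hu hH G
  have htop : ∑' i, cohenLenstraWeight u (H i) * nSur (H i) G ≠ ∞ :=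
    htsum ▸ ENNReal.mul_ne_top (invPow_ne_top _ _) ENNReal.ofReal_ne_top
  have hconst := cohenLenstraConst_pos hu
  have hterm (i : ι) : cohenLenstraConst u / ((Nat.card (H i) : ℝ) ^ u * Nat.card (AddAut (H i))) *
      nSur (H i) G = cohenLenstraConst u * (cohenLenstraWeight u (H i) * nSur (H i) G).toReal := by
    rw [ENNReal.toReal_mul, toReal_cohenLenstraWeight, ENNReal.toReal_natCast, div_eq_mul_inv,
      mul_assoc]
  have hvalue : 1 / (Nat.card G : ℝ) ^ u = cohenLenstraConst u *
      ∑' i, (cohenLenstraWeight u (H i) * nSur (H i) G).toReal := by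
    rw [← ENNReal.tsum_toReal_eq (ENNReal.ne_top_of_tsum_ne_top htop), htsum, ENNReal.toReal_mul,
      ENNReal.toReal_ofReal (inv_nonneg.2 hconst.le), invPow,
      ENNReal.toReal_ofReal (by positivity), mul_left_comm, mul_inv_cancel₀ hconst.ne', mul_one,
      one_div]
  simp only [hterm, hvalue]
  exact (ENNReal.hasSum_toReal htop).mul_left _

end CohenLenstraMoments

/-- For the Cohen–Lenstra distribution `Y`, with `P(Y ≅ H) = Q/(|H||Aut H|)`, and any finite
abelian group `G`, one has `E[#Sur(Y, G)] = ∑_H Q/(|H||Aut H|) ⬝ #Sur(H, G) = 1/|G|`, the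
sum running over a complete irredundant system `Hrep : ι → Type` of representatives of the
isomorphism classes of finite abelian groups. -/
theorem expected_surjections_cohen_lenstra
    (ι : Type) (Hrep : ι → Type) [∀ i, AddCommGroup (Hrep i)] [∀ i, Finite (Hrep i)]
    (hirr : ∀ i j : ι, Nonempty (Hrep i ≃+ Hrep j) → i = j)
    (hcompl : ∀ (H : Type) [AddCommGroup H] [Finite H], ∃ i, Nonempty (Hrep i ≃+ H))
    (G : Type*) [AddCommGroup G] [Finite G] :
    HasSum
      (fun i => Qconst / ((Nat.card (Hrep i) : ℝ) * (Nat.card (AddAut (Hrep i)) : ℝ)) *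
        (nSur (Hrep i) G : ℝ))
      (1 / (Nat.card G : ℝ)) := by
  simpa only [pow_one, cohenLenstraConst_one] using
    expected_surjections_cohen_lenstra_general one_ne_zero hirr hcompl G

end
end
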